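/- (Lemma 2.3) Let γ > 1 and let the initial data (τ₀,u₀) satisfy Assumption A. Then every C¹ solution (τ,u) of the p-system on ℝ × [0,T) with this initial data satisfies y(x,t) ≤ Y and q(x,t) ≤ Q for all (x,t) ∈ ℝ × [0,T), where Y = max{0, sup_x y(x,0)} and Q = max{0, sup_x q(x,0)}. -/

import Mathlib

open Real Set MeasureTheory Filter

/-- `η(τ) = (2√(K₁γ)/(γ−1)) τ^{−(γ−1)/2}`. -/
noncomputable def etaP (K₁ γ τv : ℝ) : ℝ :=
  2 * Real.sqrt (K₁ * γ) / (γ - 1) * τv ^ (-(γ - 1) / 2)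

/-- Lagrangian sound speed `c(τ) = √(K₁γ) τ^{−(γ+1)/2}`. -/
noncomputable def soundP (K₁ γ τv : ℝ) : ℝ :=
  Real.sqrt (K₁ * γ) * τv ^ (-(γ + 1) / 2)

/-- `K_τ = (2√(K₁γ)/(γ−1))^{2/(γ−1)}`. -/
noncomputable def KtauP (K₁ γ : ℝ) : ℝ :=
  (2 * Real.sqrt (K₁ * γ) / (γ - 1)) ^ (2 / (γ - 1))

/-- `K_c = √(K₁γ) K_τ^{−(γ+1)/2}`. -/
noncomputable def KcP (K₁ γ : ℝ) : ℝ :=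
  Real.sqrt (K₁ * γ) * KtauP K₁ γ ^ (-(γ + 1) / 2)

/-- A `Cᵏ` solution `(τ, u)` of the p-system with `γ`-law pressure `p = K₁ τ^{−γ}`
on `ℝ × I`:  `τ > 0`, both components are `Cᵏ`, and the equations
`τ_t − u_x = 0`, `u_t + (p(τ))_x = 0` hold pointwise. -/
def PSysSol (K₁ γ : ℝ) (I : Set ℝ) (k : ℕ) (τ u : ℝ → ℝ → ℝ) : Prop :=
  (∀ x t, t ∈ I → 0 < τ x t) ∧
  ContDiffOn ℝ k (fun p : ℝ × ℝ => τ p.1 p.2) (Set.univ ×ˢ I) ∧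
  ContDiffOn ℝ k (fun p : ℝ × ℝ => u p.1 p.2) (Set.univ ×ˢ I) ∧
  (∀ x : ℝ, ∀ t ∈ I, deriv (fun t' => τ x t') t - deriv (fun x' => u x' t) x = 0) ∧
  (∀ x : ℝ, ∀ t ∈ I, deriv (fun t' => u x t') t + deriv (fun x' => K₁ * τ x' t ^ (-γ)) x = 0)

/-- Assumption A: `τ₀, u₀` are `C¹` with `‖τ₀‖_{C¹} + ‖u₀‖_{C¹} ≤ M₁` and `τ₀ ≥ M₂ > 0`. -/
def AssumptionA (M₁ M₂ : ℝ) (τ₀ u₀ : ℝ → ℝ) : Prop :=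
  ContDiff ℝ 1 τ₀ ∧ ContDiff ℝ 1 u₀ ∧ 0 < M₁ ∧ 0 < M₂ ∧
  (∀ x, |τ₀ x| + |deriv τ₀ x| + |u₀ x| + |deriv u₀ x| ≤ M₁) ∧
  (∀ x, M₂ ≤ τ₀ x)

/-!
Both Riemann invariants have the form `S = u + σ η(τ)` with `σ = ±1` and are transported with
speed `σ c(τ)`. Differentiating the transport equation in `x` along a characteristic, the weight
`η^{(γ+1)/(2(γ-1))}` absorbs the term linear in `S_x` and leaves the Riccati equation
`y' = -(γ+1)/(4τ) η^{(γ+1)/(2(γ-1))} S_x² ≤ 0`, so the gradient variable at `(x, t)` is at most its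
value at the foot of the characteristic through `(x, t)`. Two points need care.

* `S` is only `C¹`, so `S_x` is differentiated along characteristics as the limit of the
  difference quotients of `S` in `x`, whose derivatives converge uniformly.
* Characteristics must reach `t = 0`. A comparison argument on backward cones bounds the Riemann
  invariants by their initial values; this bounds `η(τ)`, hence the speed `c(τ)`.
-/

open Topology
open Function (uncurry uncurry_apply_pair)

section FirstIntegral

variable {E F : Type*} [NormedAddCommGroup E] [NormedSpace ℝ E]
  [NormedAddCommGroup F] [NormedSpace ℝ F]

lemma tendsto_add_smul_nhdsNE (p v : E) :
    Tendsto (fun z : ℝ × E => z.2 + z.1 • v) (𝓝[≠] 0 ×ˢ 𝓝 p) (𝓝 p) := by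
  have hcont : Continuous fun z : ℝ × E => z.2 + z.1 • v := by fun_prop
  have hlim := hcont.tendsto (0, p)
  rw [nhds_prod_eq, zero_smul, add_zero] at hlim
  exact hlim.mono_left (prod_mono_left _ nhdsWithin_le_nhds)

lemma tendsto_slope_of_hasStrictFDerivAt {f : E → F} {f' : E →L[ℝ] F} {p : E}
    (hf : HasStrictFDerivAt f f' p) (v : E) :
    Tendsto (fun z : ℝ × E => z.1⁻¹ • (f (z.2 + z.1 • v) - f z.2))
      (𝓝[≠] 0 ×ˢ 𝓝 p) (𝓝 (f' v)) := by
  have hne : ∀ᶠ z : ℝ × E in 𝓝[≠] 0 ×ˢ 𝓝 p, z.1 ≠ 0 :=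
    tendsto_fst.eventually self_mem_nhdsWithin
  have hlittle := hf.isLittleO.comp_tendsto
    (((tendsto_add_smul_nhdsNE p v).prodMk tendsto_snd).trans nhds_prod_eq.ge)
  have hbig : (fun z : ℝ × E => z.1 • v) =O[𝓝[≠] 0 ×ˢ 𝓝 p] fun z => z.1 :=
    .of_bound ‖v‖ (.of_forall fun z => by rw [norm_smul, mul_comm])
  have hzero :=
    (hlittle.trans_isBigO (by simpa [Function.comp_def] using hbig)).tendsto_inv_smul_nhds_zero
  have := hzero.add_const (f' v)
  rw [zero_add] at this
  refine this.congr' (hne.mono fun z hz => ?_)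
  simp [smul_sub, inv_smul_smul₀ hz]

theorem hasDerivAt_fderiv_apply_of_fderiv_apply_eq_zero {S : E → F} {W : E → E} {X : ℝ → E}
    {W' : E →L[ℝ] E} {t : ℝ} (hS : ContDiffAt ℝ 1 S (X t)) (hW : HasStrictFDerivAt W W' (X t))
    (htransport : ∀ᶠ q in 𝓝 (X t), fderiv ℝ S q (W q) = 0)
    (hX : IsIntegralCurveAt X (fun _ => W) t) (v : E) :
    HasDerivAt (fun r => fderiv ℝ S (X r) v) (-fderiv ℝ S (X t) (W' v)) t := by
  have hXcont : ContinuousAt X t := hX.self_of_nhds.continuousAt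
  have hSdiff : ∀ᶠ q in 𝓝 (X t), DifferentiableAt ℝ S q :=
    (hS.eventually (by simp)).mono fun q hq => hq.differentiableAt one_ne_zero
  have hbase : Tendsto (fun z : ℝ × ℝ => (z.1, X z.2)) (𝓝[≠] 0 ×ˢ 𝓝 t) (𝓝[≠] 0 ×ˢ 𝓝 (X t)) :=
    tendsto_id.prodMap hXcont
  have hshift : Tendsto (fun z : ℝ × ℝ => X z.2 + z.1 • v) (𝓝[≠] 0 ×ˢ 𝓝 t) (𝓝 (X t)) :=
    (tendsto_add_smul_nhdsNE (X t) v).comp hbase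
  refine hasDerivAt_of_tendstoUniformlyOnFilter (l := 𝓝[≠] (0 : ℝ))
    (f := fun h r => h⁻¹ • (S (X r + h • v) - S (X r)))
    (f' := fun h r => -fderiv ℝ S (X r + h • v) (h⁻¹ • (W (X r + h • v) - W (X r))))
    (g' := fun _ => -fderiv ℝ S (X t) (W' v)) ?_ ?_ ?_
  · have hfderiv : ContinuousAt (fderiv ℝ S) (X t) :=
      (hS.fderiv_right (m := 0) (by norm_num)).continuousAt
    have hslope := (tendsto_slope_of_hasStrictFDerivAt hW v).comp hbase
    have happly := (isBoundedBilinearMap_apply.continuous.tendsto _).comp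
      ((hfderiv.tendsto.comp hshift).prodMk_nhds hslope)
    exact tendsto_prod_filter_iff.mp happly.neg
  · filter_upwards [hshift.eventually (hSdiff.and htransport),
      (hXcont.tendsto.comp tendsto_snd).eventually (hSdiff.and htransport),
      tendsto_snd.eventually hX] with z hz hz₀ hXz
    have hmoved := hz.1.hasFDerivAt.comp_hasDerivAt z.2 (hXz.add_const (z.1 • v))
    have hbased := hz₀.1.hasFDerivAt.comp_hasDerivAt z.2 hXz
    refine ((hmoved.sub hbased).const_smul z.1⁻¹).congr_deriv ?_
    have hzero : fderiv ℝ S (X z.2) (W (X z.2)) = 0 := hz₀.2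
    simp [hzero, hz.2]
  · filter_upwards [hXcont.eventually hSdiff] with r hr
    exact (hr.hasFDerivAt.hasLineDerivAt v).tendsto_slope_zero

end FirstIntegral

section BackwardCone

variable {E : Type*} [NormedAddCommGroup E]

/-- The closed backward cone of propagation with apex `p₀ = (x₀, t₀)` and speed `C`, cut off at
time `0`: no signal of speed at most `C` issued outside it reaches `p₀`. -/
def backwardCone (C : ℝ) (p₀ : E × ℝ) : Set (E × ℝ) :=
  {p | 0 ≤ p.2 ∧ p.2 ≤ p₀.2 ∧ ‖p.1 - p₀.1‖ ≤ C * (p₀.2 - p.2)}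

namespace backwardCone

variable {C : ℝ} {p p₀ : E × ℝ}

lemma apex_mem (hp₀ : 0 ≤ p₀.2) : p₀ ∈ backwardCone C p₀ := by
  simpa [backwardCone] using hp₀

lemma subset_univ_prod_Ico {T : ℝ} (hp₀ : p₀.2 < T) :
    backwardCone C p₀ ⊆ univ ×ˢ Ico 0 T :=
  fun _ hp => ⟨mem_univ _, hp.1, hp.2.1.trans_lt hp₀⟩

lemma isClosed : IsClosed (backwardCone C p₀) := by
  simp only [backwardCone, ofPred_and]
  exact (isClosed_le (by fun_prop) (by fun_prop)).inter
    ((isClosed_le (by fun_prop) (by fun_prop)).inter (isClosed_le (by fun_prop) (by fun_prop)))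

lemma isCompact [ProperSpace E] : IsCompact (backwardCone C p₀) := by
  refine ((isCompact_closedBall p₀.1 (|C| * p₀.2)).prod (isCompact_Icc (a := 0) (b := p₀.2))
    ).of_isClosed_subset isClosed fun p hp => ⟨?_, hp.1, hp.2.1⟩
  obtain ⟨h0, hle, hnorm⟩ := hp
  rw [Metric.mem_closedBall, dist_eq_norm]
  calc ‖p.1 - p₀.1‖ ≤ C * (p₀.2 - p.2) := hnorm
    _ ≤ |C| * (p₀.2 - p.2) := mul_le_mul_of_nonneg_right (le_abs_self C) (sub_nonneg.2 hle)
    _ ≤ |C| * p₀.2 := mul_le_mul_of_nonneg_left (sub_le_self _ h0) (abs_nonneg C)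

lemma add_smul_mem [NormedSpace ℝ E] {w : E} {s : ℝ} (hp : p ∈ backwardCone C p₀)
    (hw : ‖w‖ ≤ C) (hs : s ∈ Icc (-p.2) 0) : p + s • (w, 1) ∈ backwardCone C p₀ := by
  obtain ⟨-, hle, hnorm⟩ := hp
  have hdist : ‖p.1 + s • w - p₀.1‖ ≤ ‖p.1 - p₀.1‖ + -s * ‖w‖ := by
    rw [add_sub_right_comm, ← abs_of_nonpos hs.2, ← Real.norm_eq_abs, ← norm_smul]
    exact norm_add_le _ _
  have hspeed := mul_le_mul_of_nonneg_left hw (neg_nonneg.2 hs.2)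
  simp only [backwardCone, mem_ofPred_eq, Prod.fst_add, Prod.smul_fst, Prod.snd_add, Prod.smul_snd,
    smul_eq_mul, mul_one]
  exact ⟨by linarith [hs.1], by linarith [hs.2], by linarith⟩

end backwardCone

lemma exists_first_nonneg_on_backwardCone [ProperSpace E] {ι : Type*} [Finite ι] {C : ℝ}
    {p₀ p : E × ℝ} {W : ι → E × ℝ → ℝ} {i : ι}
    (hcont : ∀ i, ContinuousOn (W i) (backwardCone C p₀)) (hp : p ∈ backwardCone C p₀)
    (hWp : 0 ≤ W i p) :
    ∃ q ∈ backwardCone C p₀, (∃ j, 0 ≤ W j q) ∧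
      ∀ q' ∈ backwardCone C p₀, q'.2 < q.2 → ∀ j, W j q' < 0 := by
  have hcompact : IsCompact (⋃ j, backwardCone C p₀ ∩ W j ⁻¹' Ici 0) :=
    isCompact_iUnion fun j => backwardCone.isCompact.of_isClosed_subset
      ((hcont j).preimage_isClosed_of_isClosed backwardCone.isClosed isClosed_Ici)
      inter_subset_left
  obtain ⟨q, hq, hmin⟩ := hcompact.exists_isMinOn ⟨p, mem_iUnion.2 ⟨i, hp, hWp⟩⟩
    continuous_snd.continuousOn
  obtain ⟨j, hqcone, hqj⟩ := mem_iUnion.1 hq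
  refine ⟨q, hqcone, ⟨j, hqj⟩, fun q' hq' hlt k => lt_of_not_ge fun hk => ?_⟩
  exact hlt.not_ge (isMinOn_iff.1 hmin q' (mem_iUnion.2 ⟨k, hq', hk⟩))

variable [NormedSpace ℝ E] [ProperSpace E] {ι : Type*} [Finite ι]

theorem neg_on_backwardCone {C : ℝ} {p₀ : E × ℝ} {W : ι → E × ℝ → ℝ} (hC : 0 ≤ C)
    (hcont : ∀ i, ContinuousOn (W i) (backwardCone C p₀))
    (hinit : ∀ p ∈ backwardCone C p₀, p.2 = 0 → ∀ i, W i p < 0)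
    (hdecr : ∀ p ∈ backwardCone C p₀, 0 < p.2 → (∀ j, W j p ≤ 0) →
      ∀ i, ∃ w : E, ‖w‖ ≤ C ∧ ∃ d < 0, HasLineDerivAt ℝ (W i) d p (w, 1)) :
    ∀ p ∈ backwardCone C p₀, ∀ i, W i p < 0 := by
  by_contra! hpos
  obtain ⟨_, hp, _, hWp⟩ := hpos
  obtain ⟨q, hq, ⟨i, hWq⟩, hearlier⟩ := exists_first_nonneg_on_backwardCone hcont hp hWp
  have hqpos : 0 < q.2 := hq.1.lt_of_ne fun h => (hinit q hq h.symm i).not_ge hWq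
  have hray (w : E) (hw : ‖w‖ ≤ C) : ∀ᶠ s in 𝓝[<] (0 : ℝ),
      q + s • (w, 1) ∈ backwardCone C p₀ ∧ ∀ j, W j (q + s • (w, 1)) < 0 := by
    filter_upwards [Ioo_mem_nhdsLT (neg_lt_zero.2 hqpos)] with s hs
    have hmem := backwardCone.add_smul_mem hq hw (Ioo_subset_Icc_self hs)
    exact ⟨hmem, hearlier _ hmem (by simpa using hs.2)⟩
  have htouch (j : ι) : W j q ≤ 0 := by
    have hvertical := hray 0 (by simpa using hC)
    have hlim : Tendsto (fun s : ℝ => q + s • ((0 : E), (1 : ℝ))) (𝓝[<] 0) (𝓝 q) :=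
      tendsto_nhdsWithin_of_tendsto_nhds ((by fun_prop : Continuous _).tendsto' 0 q (by simp))
    exact le_of_tendsto ((hcont j q hq).tendsto.comp
      (tendsto_nhdsWithin_iff.2 ⟨hlim, hvertical.mono fun _ h => h.1⟩))
      (hvertical.mono fun _ h => (h.2 j).le)
  obtain ⟨w, hw, d, hd, hderiv⟩ := hdecr q hq hqpos htouch i
  refine hd.not_ge (ge_of_tendsto hderiv.tendsto_slope_zero_left ?_)
  filter_upwards [hray w hw, self_mem_nhdsWithin] with s hs hsneg
  exact smul_nonneg_of_nonpos_of_nonpos (inv_nonpos.2 (le_of_lt hsneg)) (by linarith [hs.2 i])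

theorem le_of_transport_of_speed_le {V : ι → E × ℝ → ℝ} {v : ι → E × ℝ → E} {a : ι → ℝ}
    {C δ T : ℝ} (hδ : 0 < δ)
    (hcont : ∀ i, ContinuousOn (V i) (univ ×ˢ Ico 0 T)) (hinit : ∀ i x, V i (x, 0) ≤ a i)
    (hspeed : ∀ p ∈ (univ : Set E) ×ˢ Ico 0 T, (∀ j, V j p ≤ a j + δ) → ∀ i, ‖v i p‖ ≤ C)
    (htransport : ∀ i, ∀ p ∈ (univ : Set E) ×ˢ Ioo 0 T,
      ∃ d ≤ 0, HasLineDerivAt ℝ (V i) d p (v i p, 1)) :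
    ∀ p ∈ (univ : Set E) ×ˢ Ico 0 T, ∀ i, V i p ≤ a i := by
  rintro p₀ ⟨-, hp₀⟩ i
  refine le_of_forall_pos_le_add fun η hη => ?_
  have hlen : 0 < 1 + p₀.2 := by linarith [hp₀.1]
  obtain ⟨ε, hε, hεη, hεδ⟩ : ∃ ε > 0, ε * (1 + p₀.2) ≤ η ∧ ε * (1 + p₀.2) ≤ δ :=
    ⟨min η δ / (1 + p₀.2), by positivity, by simp [hlen.ne'], by simp [hlen.ne']⟩
  have hstrip := backwardCone.subset_univ_prod_Ico (C := C) hp₀.2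
  have hC : 0 ≤ C := (norm_nonneg _).trans <|
    hspeed (0, 0) ⟨mem_univ _, le_rfl, hp₀.1.trans_lt hp₀.2⟩
      (fun j => (hinit j 0).trans (le_add_of_nonneg_right hδ.le)) i
  -- The growing barrier `ε (1 + t)` turns the weak inequalities into strict ones.
  have hbarrier := neg_on_backwardCone (p₀ := p₀)
    (W := fun j p => V j p - (a j + ε * (1 + p.2))) hC
    (fun j => ((hcont j).mono hstrip).sub (by fun_prop)) ?_ ?_
    p₀ (backwardCone.apex_mem hp₀.1) i
  · linarith
  · rintro ⟨x, t⟩ - rfl j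
    dsimp only
    linarith [hinit j x]
  · intro p hp hpos hle j
    have hbelow : ε * (1 + p.2) ≤ δ := (by gcongr; exact hp.2.1 : _ ≤ ε * (1 + p₀.2)).trans hεδ
    obtain ⟨d, hd, hderiv⟩ := htransport j p ⟨mem_univ _, hpos, (hstrip hp).2.2⟩
    have htime := (hasFDerivAt_snd (𝕜 := ℝ) (p := p)).hasLineDerivAt (v j p, 1)
    exact ⟨v j p, hspeed p (hstrip hp) (fun k => by linarith [hle k]) j, d - ε * 1, by linarith,
      HasDerivAt.sub hderiv (((HasDerivAt.const_add 1 htime).const_mul ε).const_add (a j))⟩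

theorem exists_isIntegralCurveOn_of_norm_le {c : E × ℝ → E} {a b t₀ C : ℝ}
    (hc : ContDiffOn ℝ 1 c (univ ×ˢ Icc a b)) (hbound : ∀ p ∈ (univ : Set E) ×ˢ Icc a b, ‖c p‖ ≤ C)
    (ht₀ : t₀ ∈ Icc a b) (x₀ : E) :
    ∃ X : ℝ → E, X t₀ = x₀ ∧ IsIntegralCurveOn X (fun t x => c (x, t)) (Icc a b) := by
  have hab : 0 ≤ b - a := sub_nonneg.2 (ht₀.1.trans ht₀.2)
  have hC : 0 ≤ C := (norm_nonneg _).trans (hbound (0, t₀) ⟨mem_univ _, ht₀⟩)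
  lift C to NNReal using hC
  obtain ⟨R, hR⟩ : ∃ R : NNReal, (R : ℝ) = C * (b - a) := ⟨C * ⟨b - a, hab⟩, rfl⟩
  have hmaps : Metric.closedBall x₀ R ×ˢ Icc a b ⊆ univ ×ˢ Icc a b :=
    prod_mono_left (subset_univ _)
  obtain ⟨K, hK⟩ := (hc.mono hmaps).exists_lipschitzOnWith one_ne_zero
    ((convex_closedBall x₀ _).prod (convex_Icc a b))
    ((isCompact_closedBall x₀ _).prod isCompact_Icc)
  have hpicard : IsPicardLindelof (fun t x => c (x, t)) ⟨t₀, ht₀⟩ x₀ R 0 C K :=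
    { lipschitzOnWith := fun t ht => .of_dist_le_mul fun x hx x' hx' => by
        simpa [Prod.dist_eq] using hK.dist_le_mul (x, t) ⟨hx, ht⟩ (x', t) ⟨hx', ht⟩
      continuousOn := fun x _ => hc.continuousOn.comp (by fun_prop) fun t ht => ⟨mem_univ _, ht⟩
      norm_le := fun t ht x _ => hbound (x, t) ⟨mem_univ _, ht⟩
      mul_max_le := by
        rw [NNReal.coe_zero, sub_zero, hR]
        gcongr
        exact max_le (by linarith [ht₀.1]) (by linarith [ht₀.2]) }
  exact hpicard.exists_eq_forall_mem_Icc_hasDerivWithinAt₀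

end BackwardCone

section GasLaw

variable {K₁ γ a : ℝ}

lemma soundP_pos (hK₁ : 0 < K₁) (hγ : 0 < γ) (ha : 0 < a) : 0 < soundP K₁ γ a := by
  unfold soundP
  positivity

lemma etaP_pos (hK₁ : 0 < K₁) (hγ : 1 < γ) (ha : 0 < a) : 0 < etaP K₁ γ a := by
  have : 0 < γ := zero_lt_one.trans hγ
  have : 0 < γ - 1 := sub_pos.2 hγ
  unfold etaP
  positivity

lemma etaP_antitoneOn (hγ : 1 < γ) : AntitoneOn (etaP K₁ γ) (Ioi 0) := by
  intro a ha b _ hab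
  have : 0 < γ - 1 := sub_pos.2 hγ
  exact mul_le_mul_of_nonneg_left
    (rpow_le_rpow_of_nonpos ha hab (by linarith)) (by positivity)

lemma soundP_antitoneOn (hγ : -1 < γ) : AntitoneOn (soundP K₁ γ) (Ioi 0) := fun _ ha _ _ hab =>
  mul_le_mul_of_nonneg_left (rpow_le_rpow_of_nonpos ha hab (by linarith)) (sqrt_nonneg _)

lemma soundP_sq (hK₁γ : 0 ≤ K₁ * γ) (ha : 0 ≤ a) :
    soundP K₁ γ a ^ 2 = K₁ * γ * a ^ (-γ - 1) := by
  rw [soundP, mul_pow, sq_sqrt hK₁γ, ← rpow_mul_natCast ha]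
  congr 2
  push_cast
  ring

lemma soundP_eq_etaP_div (hγ : γ ≠ 1) (ha : a ≠ 0) :
    soundP K₁ γ a = (γ - 1) / 2 * etaP K₁ γ a / a := by
  have hγ₁ : γ - 1 ≠ 0 := sub_ne_zero.2 hγ
  rw [soundP, etaP, show -(γ + 1) / 2 = -(γ - 1) / 2 - 1 by ring, rpow_sub_one ha]
  field_simp

lemma soundP_eq_KcP_mul_rpow (hK₁ : 0 < K₁) (hγ : 1 < γ) (ha : 0 < a) :
    soundP K₁ γ a = KcP K₁ γ * etaP K₁ γ a ^ ((γ + 1) / (γ - 1)) := by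
  have hγ₁ : 0 < γ - 1 := sub_pos.2 hγ
  have : 0 < γ := zero_lt_one.trans hγ
  have hA : 0 < 2 * √(K₁ * γ) / (γ - 1) := by positivity
  rw [soundP, KcP, KtauP, etaP, mul_rpow hA.le (by positivity), ← rpow_mul hA.le,
    ← rpow_mul ha.le, mul_assoc, ← mul_assoc (_ ^ _), ← rpow_add hA,
    show 2 / (γ - 1) * (-(γ + 1) / 2) + (γ + 1) / (γ - 1) = 0 by field_simp; ring,
    show -(γ - 1) / 2 * ((γ + 1) / (γ - 1)) = -(γ + 1) / 2 by field_simp, rpow_zero, one_mul]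

lemma soundP_le_of_etaP_le {B : ℝ} (hK₁ : 0 < K₁) (hγ : 1 < γ) (ha : 0 < a)
    (hB : etaP K₁ γ a ≤ B) : soundP K₁ γ a ≤ KcP K₁ γ * B ^ ((γ + 1) / (γ - 1)) := by
  have : 0 < γ - 1 := sub_pos.2 hγ
  have hKc : 0 ≤ KcP K₁ γ := mul_nonneg (sqrt_nonneg _) (by unfold KtauP; positivity)
  have hη := etaP_pos hK₁ hγ ha
  rw [soundP_eq_KcP_mul_rpow hK₁ hγ ha]
  gcongr

lemma hasDerivAt_etaP (hγ : γ ≠ 1) (ha : a ≠ 0) :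
    HasDerivAt (etaP K₁ γ) (-soundP K₁ γ a) a := by
  have hγ₁ : γ - 1 ≠ 0 := sub_ne_zero.2 hγ
  refine ((hasDerivAt_rpow_const (.inl ha)).const_mul _).congr_deriv ?_
  rw [soundP, show -(γ + 1) / 2 = -(γ - 1) / 2 - 1 by ring]
  field_simp

lemma hasDerivAt_soundP (ha : a ≠ 0) :
    HasDerivAt (soundP K₁ γ) (-(γ + 1) / 2 * (soundP K₁ γ a / a)) a := by
  refine ((hasDerivAt_rpow_const (.inl ha)).const_mul _).congr_deriv ?_
  rw [soundP, rpow_sub_one ha]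
  ring

lemma hasDerivAt_etaP_rpow (hK₁ : 0 < K₁) (hγ : 1 < γ) (ha : 0 < a) :
    HasDerivAt (fun b => etaP K₁ γ b ^ ((γ + 1) / (2 * (γ - 1))))
      (-(γ + 1) / (4 * a) * etaP K₁ γ a ^ ((γ + 1) / (2 * (γ - 1)))) a := by
  have hγ₁ : γ - 1 ≠ 0 := sub_ne_zero.2 hγ.ne'
  have hη : etaP K₁ γ a ≠ 0 := (etaP_pos hK₁ hγ ha).ne'
  refine ((hasDerivAt_etaP hγ.ne' ha.ne').rpow_const (.inl hη)).congr_deriv ?_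
  rw [soundP_eq_etaP_div hγ.ne' ha.ne', rpow_sub_one hη]
  field_simp
  ring

lemma contDiffAt_etaP {n : WithTop ℕ∞} (ha : a ≠ 0) : ContDiffAt ℝ n (etaP K₁ γ) a :=
  contDiffAt_const.mul (contDiffAt_rpow_const_of_ne ha)

lemma contDiffAt_soundP {n : WithTop ℕ∞} (ha : a ≠ 0) : ContDiffAt ℝ n (soundP K₁ γ) a :=
  contDiffAt_const.mul (contDiffAt_rpow_const_of_ne ha)

end GasLaw

section PartialDerivatives

variable {G : Type*} [NormedAddCommGroup G] [NormedSpace ℝ G] {F : ℝ × ℝ → G}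
  {F' : ℝ × ℝ →L[ℝ] G} {I : Set ℝ} {x t : ℝ}

lemma hasDerivAt_fst_of_hasFDerivWithinAt (hF : HasFDerivWithinAt F F' (univ ×ˢ I) (x, t))
    (ht : t ∈ I) : HasDerivAt (fun x' => F (x', t)) (F' (1, 0)) x :=
  (hF.comp_hasDerivWithinAt (f := fun x' => (x', t)) x
    ((hasDerivWithinAt_id x univ).prodMk (hasDerivWithinAt_const x univ t))
    fun _ _ => ⟨mem_univ _, ht⟩).hasDerivAt univ_mem

lemma hasDerivAt_fst_of_hasFDerivAt (hF : HasFDerivAt F F' (x, t)) :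
    HasDerivAt (fun x' => F (x', t)) (F' (1, 0)) x :=
  hasDerivAt_fst_of_hasFDerivWithinAt (I := univ) hF.hasFDerivWithinAt (mem_univ t)

lemma hasDerivAt_snd_of_hasFDerivAt (hF : HasFDerivAt F F' (x, t)) :
    HasDerivAt (fun t' => F (x, t')) (F' (0, 1)) t :=
  hF.comp_hasDerivAt (f := fun t' => (x, t')) t ((hasDerivAt_const t x).prodMk (hasDerivAt_id t))

lemma continuousOn_deriv_fst (hF : ContDiffOn ℝ 1 F (univ ×ˢ I)) (hI : UniqueDiffOn ℝ I) :
    ContinuousOn (fun p : ℝ × ℝ => deriv (fun x => F (x, p.2)) p.1) (univ ×ˢ I) := by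
  have hfderiv := hF.continuousOn_fderivWithin (uniqueDiffOn_univ.prod hI) le_rfl
  refine (hfderiv.clm_apply (g := fun _ => (1, 0)) continuousOn_const).congr fun p hp => ?_
  exact (hasDerivAt_fst_of_hasFDerivWithinAt
    (hF.differentiableOn one_ne_zero p hp).hasFDerivWithinAt hp.2).deriv

lemma fderiv_apply_mk_one (f : ℝ × ℝ → ℝ) (p : ℝ × ℝ) (w : ℝ) :
    fderiv ℝ f p (w, 1) = w * fderiv ℝ f p (1, 0) + fderiv ℝ f p (0, 1) := by
  rw [← smul_eq_mul, ← map_smul, ← map_add]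
  simp

end PartialDerivatives

lemma univ_prod_Ico_mem_nhds {E : Type*} [TopologicalSpace E] {T : ℝ} {p : E × ℝ}
    (hp : p.2 ∈ Ioo 0 T) : univ ×ˢ Ico 0 T ∈ 𝓝 p :=
  prod_mem_nhds univ_mem (Ico_mem_nhds hp.1 hp.2)

/-- The Riemann invariant `u + σ η(τ)`: `s` for `σ = 1` and `r` for `σ = -1`. Keeping the sign `σ`
as a parameter, with `σ ^ 2 = 1`, treats both characteristic families at once. -/
noncomputable def riemannInv (K₁ γ σ : ℝ) (τ u : ℝ → ℝ → ℝ) (p : ℝ × ℝ) : ℝ :=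
  u p.1 p.2 + σ * etaP K₁ γ (τ p.1 p.2)

/-- The weighted slope `η^{(γ+1)/(2(γ-1))} S_x` of the Riemann invariant `S` with sign `σ`: the
gradient variable `y` for `σ = 1` and `q` for `σ = -1`. -/
noncomputable def gradVar (K₁ γ σ : ℝ) (τ u : ℝ → ℝ → ℝ) (p : ℝ × ℝ) : ℝ :=
  etaP K₁ γ (τ p.1 p.2) ^ ((γ + 1) / (2 * (γ - 1))) *
    deriv (fun x => riemannInv K₁ γ σ τ u (x, p.2)) p.1

lemma riemannInv_one_sub_riemannInv_neg_one (K₁ γ : ℝ) (τ u : ℝ → ℝ → ℝ) (p : ℝ × ℝ) :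
    riemannInv K₁ γ 1 τ u p - riemannInv K₁ γ (-1) τ u p = 2 * etaP K₁ γ (τ p.1 p.2) := by
  simp only [riemannInv]
  ring

lemma gradVar_one (K₁ γ : ℝ) (τ u : ℝ → ℝ → ℝ) (x t : ℝ) :
    gradVar K₁ γ 1 τ u (x, t) = etaP K₁ γ (τ x t) ^ ((γ + 1) / (2 * (γ - 1))) *
      deriv (fun x' => u x' t + etaP K₁ γ (τ x' t)) x := by
  simp only [gradVar, riemannInv, one_mul]

lemma gradVar_neg_one (K₁ γ : ℝ) (τ u : ℝ → ℝ → ℝ) (x t : ℝ) :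
    gradVar K₁ γ (-1) τ u (x, t) = etaP K₁ γ (τ x t) ^ ((γ + 1) / (2 * (γ - 1))) *
      deriv (fun x' => u x' t - etaP K₁ γ (τ x' t)) x := by
  simp only [gradVar, riemannInv, neg_one_mul, sub_eq_add_neg]

namespace PSysSol

section AnyStrip

variable {K₁ γ : ℝ} {I : Set ℝ} {τ u : ℝ → ℝ → ℝ}

lemma contDiffOn_tau (h : PSysSol K₁ γ I 1 τ u) : ContDiffOn ℝ 1 (uncurry τ) (univ ×ˢ I) :=
  mod_cast h.2.1

lemma contDiffOn_u (h : PSysSol K₁ γ I 1 τ u) : ContDiffOn ℝ 1 (uncurry u) (univ ×ˢ I) :=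
  mod_cast h.2.2.1

lemma tau_pos (h : PSysSol K₁ γ I 1 τ u) {p : ℝ × ℝ} (hp : p ∈ univ ×ˢ I) : 0 < τ p.1 p.2 :=
  h.1 p.1 p.2 hp.2

lemma contDiffOn_comp_tau (h : PSysSol K₁ γ I 1 τ u) {f : ℝ → ℝ}
    (hf : ∀ a > 0, ContDiffAt ℝ 1 f a) :
    ContDiffOn ℝ 1 (fun p : ℝ × ℝ => f (τ p.1 p.2)) (univ ×ˢ I) := fun p hp =>
  ContDiffAt.comp_contDiffWithinAt (f := uncurry τ) p (hf _ (h.tau_pos hp)) (h.contDiffOn_tau p hp)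

lemma contDiffOn_etaP (h : PSysSol K₁ γ I 1 τ u) :
    ContDiffOn ℝ 1 (fun p : ℝ × ℝ => etaP K₁ γ (τ p.1 p.2)) (univ ×ˢ I) :=
  h.contDiffOn_comp_tau fun _ ha => contDiffAt_etaP ha.ne'

lemma contDiffOn_soundP (h : PSysSol K₁ γ I 1 τ u) :
    ContDiffOn ℝ 1 (fun p : ℝ × ℝ => soundP K₁ γ (τ p.1 p.2)) (univ ×ˢ I) :=
  h.contDiffOn_comp_tau fun _ ha => contDiffAt_soundP ha.ne'

lemma contDiffOn_riemannInv (h : PSysSol K₁ γ I 1 τ u) (σ : ℝ) :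
    ContDiffOn ℝ 1 (riemannInv K₁ γ σ τ u) (univ ×ˢ I) :=
  h.contDiffOn_u.add (contDiffOn_const.mul h.contDiffOn_etaP)

lemma continuousOn_gradVar (h : PSysSol K₁ γ I 1 τ u) (hI : UniqueDiffOn ℝ I) (hK₁ : 0 < K₁)
    (hγ : 1 < γ) (σ : ℝ) : ContinuousOn (gradVar K₁ γ σ τ u) (univ ×ˢ I) :=
  (h.contDiffOn_etaP.continuousOn.rpow_const fun _ hp =>
    .inl (etaP_pos hK₁ hγ (h.tau_pos hp)).ne').mul
    (continuousOn_deriv_fst (h.contDiffOn_riemannInv σ) hI)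

lemma deriv_riemannInv (h : PSysSol K₁ γ I 1 τ u) (hγ : γ ≠ 1) (σ : ℝ) {x t : ℝ} (ht : t ∈ I) :
    deriv (fun x' => riemannInv K₁ γ σ τ u (x', t)) x =
      deriv (fun x' => u x' t) x - σ * soundP K₁ γ (τ x t) * deriv (fun x' => τ x' t) x := by
  have hp : (x, t) ∈ univ ×ˢ I := ⟨mem_univ x, ht⟩
  have hu := hasDerivAt_fst_of_hasFDerivWithinAt
    (h.contDiffOn_u.differentiableOn one_ne_zero _ hp).hasFDerivWithinAt ht
  have hτ := hasDerivAt_fst_of_hasFDerivWithinAt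
    (h.contDiffOn_tau.differentiableOn one_ne_zero _ hp).hasFDerivWithinAt ht
  have hη : HasDerivAt (fun x' => etaP K₁ γ (τ x' t)) _ x :=
    HasDerivAt.comp (h := fun x' => τ x' t) x (hasDerivAt_etaP hγ (h.tau_pos hp).ne') hτ
  refine (hu.add (hη.const_mul σ)).deriv.trans ?_
  rw [hu.deriv.symm, hτ.deriv.symm]
  simp only [uncurry_apply_pair]
  ring

lemma bddAbove_range_gradVar (h : PSysSol K₁ γ I 1 τ u) (hK₁ : 0 < K₁) (hγ : 1 < γ)
    {σ t m A B : ℝ} (hσ : |σ| ≤ 1) (ht : t ∈ I) (hm : 0 < m) (hτ : ∀ x, m ≤ τ x t)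
    (hτ' : ∀ x, |deriv (fun x' => τ x' t) x| ≤ A) (hu' : ∀ x, |deriv (fun x' => u x' t) x| ≤ B) :
    BddAbove (range fun x => gradVar K₁ γ σ τ u (x, t)) := by
  refine ⟨etaP K₁ γ m ^ ((γ + 1) / (2 * (γ - 1))) * (B + soundP K₁ γ m * A), ?_⟩
  rintro _ ⟨x, rfl⟩
  have hpos : 0 < τ x t := h.1 x t ht
  have hη := etaP_pos hK₁ hγ hpos
  have hc := soundP_pos hK₁ (zero_lt_one.trans hγ) hpos
  have hcm : soundP K₁ γ (τ x t) ≤ soundP K₁ γ m :=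
    soundP_antitoneOn (by linarith) hm hpos (hτ x)
  have hspeed : |σ * soundP K₁ γ (τ x t)| ≤ soundP K₁ γ m := by
    rw [abs_mul, abs_of_pos hc]
    exact (mul_le_of_le_one_left hc.le hσ).trans hcm
  have hslope : |deriv (fun x' => riemannInv K₁ γ σ τ u (x', t)) x| ≤ B + soundP K₁ γ m * A := by
    rw [h.deriv_riemannInv hγ.ne' σ ht]
    refine (abs_sub _ _).trans (add_le_add (hu' x) ?_)
    rw [abs_mul]
    exact mul_le_mul hspeed (hτ' x) (abs_nonneg _) (hc.le.trans hcm)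
  have hweight : etaP K₁ γ (τ x t) ^ ((γ + 1) / (2 * (γ - 1))) ≤
      etaP K₁ γ m ^ ((γ + 1) / (2 * (γ - 1))) :=
    rpow_le_rpow hη.le (etaP_antitoneOn hγ hm hpos (hτ x))
      (div_nonneg (by linarith) (by linarith))
  exact (mul_le_mul_of_nonneg_left ((le_abs_self _).trans hslope) (rpow_nonneg hη.le _)).trans
    (mul_le_mul_of_nonneg_right hweight ((abs_nonneg _).trans hslope))

lemma bddAbove_range_gradVar_initial (h : PSysSol K₁ γ I 1 τ u) (hK₁ : 0 < K₁) (hγ : 1 < γ)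
    (hI : 0 ∈ I) {M₁ M₂ σ : ℝ} (hA : AssumptionA M₁ M₂ (fun x => τ x 0) fun x => u x 0)
    (hσ : |σ| ≤ 1) : BddAbove (range fun x => gradVar K₁ γ σ τ u (x, 0)) := by
  obtain ⟨-, -, -, hM₂, hM₁, hτ⟩ := hA
  refine h.bddAbove_range_gradVar hK₁ hγ hσ hI hM₂ hτ (A := M₁) (B := M₁) (fun x => ?_)
    fun x => ?_ <;>
  linarith [hM₁ x, abs_nonneg (τ x 0), abs_nonneg (deriv (fun x' => τ x' 0) x),
    abs_nonneg (u x 0), abs_nonneg (deriv (fun x' => u x' 0) x)]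

end AnyStrip

section Interior

variable {K₁ γ T : ℝ} {τ u : ℝ → ℝ → ℝ} {p : ℝ × ℝ}

lemma tau_pos_of_mem_Ioo (h : PSysSol K₁ γ (Ico 0 T) 1 τ u) (hp : p.2 ∈ Ioo 0 T) :
    0 < τ p.1 p.2 :=
  h.1 p.1 p.2 (Ioo_subset_Ico_self hp)

lemma hasFDerivAt_tau (h : PSysSol K₁ γ (Ico 0 T) 1 τ u) (hp : p.2 ∈ Ioo 0 T) :
    HasFDerivAt (uncurry τ) (fderiv ℝ (uncurry τ) p) p :=
  ((h.contDiffOn_tau.contDiffAt (univ_prod_Ico_mem_nhds hp)).differentiableAt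
    one_ne_zero).hasFDerivAt

lemma hasFDerivAt_u (h : PSysSol K₁ γ (Ico 0 T) 1 τ u) (hp : p.2 ∈ Ioo 0 T) :
    HasFDerivAt (uncurry u) (fderiv ℝ (uncurry u) p) p :=
  ((h.contDiffOn_u.contDiffAt (univ_prod_Ico_mem_nhds hp)).differentiableAt
    one_ne_zero).hasFDerivAt

lemma fderiv_tau_snd (h : PSysSol K₁ γ (Ico 0 T) 1 τ u) (hp : p.2 ∈ Ioo 0 T) :
    fderiv ℝ (uncurry τ) p (0, 1) = fderiv ℝ (uncurry u) p (1, 0) := by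
  rw [← (hasDerivAt_snd_of_hasFDerivAt (h.hasFDerivAt_tau hp)).deriv,
    ← (hasDerivAt_fst_of_hasFDerivAt (h.hasFDerivAt_u hp)).deriv]
  exact sub_eq_zero.1 (h.2.2.2.1 p.1 p.2 (Ioo_subset_Ico_self hp))

lemma fderiv_u_snd (h : PSysSol K₁ γ (Ico 0 T) 1 τ u) (hK₁γ : 0 ≤ K₁ * γ) (hp : p.2 ∈ Ioo 0 T) :
    fderiv ℝ (uncurry u) p (0, 1) =
      soundP K₁ γ (τ p.1 p.2) ^ 2 * fderiv ℝ (uncurry τ) p (1, 0) := by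
  have hpos := h.tau_pos_of_mem_Ioo hp
  have hτ : HasDerivAt (fun x => τ x p.2) _ p.1 :=
    hasDerivAt_fst_of_hasFDerivAt (h.hasFDerivAt_tau hp)
  have hpressure := ((hτ.rpow_const (p := -γ) (.inl hpos.ne')).const_mul K₁).deriv
  have hmomentum := h.2.2.2.2 p.1 p.2 (Ioo_subset_Ico_self hp)
  rw [← (hasDerivAt_snd_of_hasFDerivAt (h.hasFDerivAt_u hp)).deriv, soundP_sq hK₁γ hpos.le]
  simp only [uncurry_apply_pair]
  linear_combination hmomentum - hpressure

lemma hasFDerivAt_riemannInv (h : PSysSol K₁ γ (Ico 0 T) 1 τ u) (hγ : γ ≠ 1) (σ : ℝ)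
    (hp : p.2 ∈ Ioo 0 T) :
    HasFDerivAt (riemannInv K₁ γ σ τ u) (fderiv ℝ (uncurry u) p +
      σ • -soundP K₁ γ (τ p.1 p.2) • fderiv ℝ (uncurry τ) p) p :=
  (h.hasFDerivAt_u hp).add ((HasDerivAt.comp_hasFDerivAt (f := uncurry τ) p
    (hasDerivAt_etaP hγ (h.tau_pos_of_mem_Ioo hp).ne') (h.hasFDerivAt_tau hp)).const_mul σ)

theorem fderiv_riemannInv_characteristic (h : PSysSol K₁ γ (Ico 0 T) 1 τ u)
    (hK₁γ : 0 ≤ K₁ * γ) (hγ : γ ≠ 1) {σ : ℝ} (hσ : σ ^ 2 = 1) (hp : p.2 ∈ Ioo 0 T) :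
    fderiv ℝ (riemannInv K₁ γ σ τ u) p (σ * soundP K₁ γ (τ p.1 p.2), 1) = 0 := by
  rw [(h.hasFDerivAt_riemannInv hγ σ hp).fderiv]
  simp only [add_apply, smul_apply, smul_eq_mul,
    fderiv_apply_mk_one, h.fderiv_tau_snd hp, h.fderiv_u_snd hK₁γ hp]
  linear_combination
    (-soundP K₁ γ (τ p.1 p.2) ^ 2 * fderiv ℝ (uncurry τ) p (1, 0)) * hσ

lemma hasStrictFDerivAt_soundP (h : PSysSol K₁ γ (Ico 0 T) 1 τ u) (hp : p.2 ∈ Ioo 0 T) :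
    HasStrictFDerivAt (fun p : ℝ × ℝ => soundP K₁ γ (τ p.1 p.2))
      ((-(γ + 1) / 2 * (soundP K₁ γ (τ p.1 p.2) / τ p.1 p.2)) • fderiv ℝ (uncurry τ) p) p :=
  (h.contDiffOn_soundP.contDiffAt (univ_prod_Ico_mem_nhds hp)).hasStrictFDerivAt'
    ((hasDerivAt_soundP (h.tau_pos_of_mem_Ioo hp).ne').comp_hasFDerivAt (f := uncurry τ) p
      (h.hasFDerivAt_tau hp)) one_ne_zero

lemma deriv_riemannInv_eq_fderiv (h : PSysSol K₁ γ (Ico 0 T) 1 τ u) (hγ : γ ≠ 1) (σ : ℝ)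
    (hp : p.2 ∈ Ioo 0 T) :
    deriv (fun x => riemannInv K₁ γ σ τ u (x, p.2)) p.1 =
      fderiv ℝ (riemannInv K₁ γ σ τ u) p (1, 0) :=
  (hasDerivAt_fst_of_hasFDerivAt
    (h.hasFDerivAt_riemannInv hγ σ hp).differentiableAt.hasFDerivAt).deriv

variable {σ t : ℝ} {X : ℝ → ℝ}

lemma hasDerivAt_fderiv_riemannInv (h : PSysSol K₁ γ (Ico 0 T) 1 τ u) (hK₁γ : 0 ≤ K₁ * γ)
    (hγ : γ ≠ 1) (hσ : σ ^ 2 = 1) (ht : t ∈ Ioo 0 T)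
    (hX : IsIntegralCurveAt X (fun t x => σ * soundP K₁ γ (τ x t)) t) :
    HasDerivAt (fun r => fderiv ℝ (riemannInv K₁ γ σ τ u) (X r, r) (1, 0))
      (σ * ((γ + 1) / 2) * (soundP K₁ γ (τ (X t) t) / τ (X t) t) *
        fderiv ℝ (uncurry τ) (X t, t) (1, 0) *
        fderiv ℝ (riemannInv K₁ γ σ τ u) (X t, t) (1, 0)) t := by
  have hS : ContDiffAt ℝ 1 (riemannInv K₁ γ σ τ u) (X t, t) :=
    (h.contDiffOn_riemannInv σ).contDiffAt (univ_prod_Ico_mem_nhds ht)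
  have hspeed := (h.hasStrictFDerivAt_soundP (p := (X t, t)) ht).const_mul σ
  have htransport : ∀ᶠ p : ℝ × ℝ in 𝓝 (X t, t),
      fderiv ℝ (riemannInv K₁ γ σ τ u) p (σ * soundP K₁ γ (τ p.1 p.2), 1) = 0 :=
    (continuousAt_snd.eventually_mem (isOpen_Ioo.mem_nhds ht)).mono fun p hp =>
      h.fderiv_riemannInv_characteristic hK₁γ hγ hσ hp
  have hlift : IsIntegralCurveAt (fun r => (X r, r))
      (fun _ p => (σ * soundP K₁ γ (τ p.1 p.2), (1 : ℝ))) t :=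
    hX.mono fun r hr => hr.prodMk (hasDerivAt_id r)
  refine (hasDerivAt_fderiv_apply_of_fderiv_apply_eq_zero (X := fun r => (X r, r)) hS
    (hspeed.prodMk (hasStrictFDerivAt_const 1 _)) htransport hlift (1, 0)).congr_deriv ?_
  have hpair (a : ℝ) : ((a, 0) : ℝ × ℝ) = a • (1, 0) := by simp
  simp only [ContinuousLinearMap.prod_apply, smul_apply, zero_apply, smul_eq_mul]
  rw [hpair, map_smul, smul_eq_mul]
  ring

theorem hasDerivAt_gradVar_characteristic (h : PSysSol K₁ γ (Ico 0 T) 1 τ u) (hK₁ : 0 < K₁)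
    (hγ : 1 < γ) (hσ : σ ^ 2 = 1) (ht : t ∈ Ioo 0 T)
    (hX : IsIntegralCurveAt X (fun t x => σ * soundP K₁ γ (τ x t)) t) :
    HasDerivAt (fun r => gradVar K₁ γ σ τ u (X r, r))
      (-(γ + 1) / (4 * τ (X t) t) * etaP K₁ γ (τ (X t) t) ^ ((γ + 1) / (2 * (γ - 1))) *
        fderiv ℝ (riemannInv K₁ γ σ τ u) (X t, t) (1, 0) ^ 2) t := by
  have hK₁γ : 0 ≤ K₁ * γ := by positivity
  have hpos : 0 < τ (X t) t := h.tau_pos_of_mem_Ioo (p := (X t, t)) ht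
  have hτ : HasDerivAt (fun r => τ (X r) r) _ t := (h.hasFDerivAt_tau ht).comp_hasDerivAt t
    (f := fun r => (X r, r)) (hX.self_of_nhds.prodMk (hasDerivAt_id t))
  have hweight := (hasDerivAt_etaP_rpow hK₁ hγ hpos).comp (h := fun r => τ (X r) r) t hτ
  have hgrad := h.hasDerivAt_fderiv_riemannInv hK₁γ hγ.ne' hσ ht hX
  refine ((hweight.mul hgrad).congr_of_eventuallyEq ?_).congr_deriv ?_
  · filter_upwards [isOpen_Ioo.mem_nhds ht] with r hr
    exact congrArg _ (h.deriv_riemannInv_eq_fderiv hγ.ne' σ (p := (X r, r)) hr)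
  · rw [fderiv_apply_mk_one, h.fderiv_tau_snd ht,
      (h.hasFDerivAt_riemannInv hγ.ne' σ (p := (X t, t)) ht).fderiv]
    simp only [add_apply, smul_apply, smul_eq_mul, Function.comp_apply]
    field_simp
    ring

theorem sign_mul_riemannInv_le (h : PSysSol K₁ γ (Ico 0 T) 1 τ u) (hK₁ : 0 < K₁)
    (hγ : 1 < γ) {M m : ℝ} (hm : 0 < m) (hτ₀ : ∀ x, m ≤ τ x 0) (hu₀ : ∀ x, |u x 0| ≤ M) :
    ∀ p ∈ univ ×ˢ Ico 0 T, ∀ σ : ({1, -1} : Set ℝ),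
      σ * riemannInv K₁ γ σ τ u p ≤ M + etaP K₁ γ m := by
  refine le_of_transport_of_speed_le (δ := 1) zero_lt_one
    (v := fun (σ : ({1, -1} : Set ℝ)) p => σ * soundP K₁ γ (τ p.1 p.2))
    (C := KcP K₁ γ * (M + etaP K₁ γ m + 1) ^ ((γ + 1) / (γ - 1)))
    (fun σ => continuousOn_const.mul (h.contDiffOn_riemannInv σ).continuousOn) ?_ ?_ ?_
  · rintro ⟨σ, rfl | rfl⟩ x <;>
    · have hη := etaP_antitoneOn (K₁ := K₁) hγ hm (hm.trans_le (hτ₀ x)) (hτ₀ x)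
      simp only [riemannInv]
      linarith [abs_le.1 (hu₀ x)]
  · intro p hp hbound σ
    have hη : etaP K₁ γ (τ p.1 p.2) ≤ M + etaP K₁ γ m + 1 := by
      linarith [hbound ⟨1, by simp⟩, hbound ⟨-1, by simp⟩,
        riemannInv_one_sub_riemannInv_neg_one K₁ γ τ u p]
    have hc := soundP_le_of_etaP_le hK₁ hγ (h.tau_pos hp) hη
    have hpos := soundP_pos hK₁ (zero_lt_one.trans hγ) (h.tau_pos hp)
    obtain ⟨σ, rfl | rfl⟩ := σ <;> simpa [abs_of_pos hpos] using hc
  · rintro ⟨σ, hσ⟩ p ⟨-, hp⟩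
    have hσ₂ : σ ^ 2 = 1 := by obtain rfl | rfl := hσ <;> norm_num
    have hS := (h.hasFDerivAt_riemannInv hγ.ne' σ hp).differentiableAt.hasFDerivAt
    have hzero := h.fderiv_riemannInv_characteristic (by positivity) hγ.ne' hσ₂ hp
    refine ⟨_, ?_, (hS.const_mul σ).hasLineDerivAt _⟩
    rw [smul_apply, hzero, smul_zero]

theorem soundP_le_of_initial_bounds (h : PSysSol K₁ γ (Ico 0 T) 1 τ u) (hK₁ : 0 < K₁)
    (hγ : 1 < γ) {M m : ℝ} (hm : 0 < m) (hτ₀ : ∀ x, m ≤ τ x 0) (hu₀ : ∀ x, |u x 0| ≤ M) :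
    ∀ p ∈ univ ×ˢ Ico 0 T, soundP K₁ γ (τ p.1 p.2) ≤
      KcP K₁ γ * (M + etaP K₁ γ m) ^ ((γ + 1) / (γ - 1)) := by
  intro p hp
  have hinv := h.sign_mul_riemannInv_le hK₁ hγ hm hτ₀ hu₀ p hp
  refine soundP_le_of_etaP_le hK₁ hγ (h.tau_pos hp) ?_
  linarith [hinv ⟨1, by simp⟩, hinv ⟨-1, by simp⟩,
    riemannInv_one_sub_riemannInv_neg_one K₁ γ τ u p]

theorem exists_isIntegralCurveOn_characteristic (h : PSysSol K₁ γ (Ico 0 T) 1 τ u) {C : ℝ}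
    (hC : ∀ p ∈ univ ×ˢ Ico 0 T, soundP K₁ γ (τ p.1 p.2) ≤ C) (hσ : |σ| ≤ 1)
    (ht : t ∈ Ico 0 T) (x : ℝ) :
    ∃ X : ℝ → ℝ, X t = x ∧
      IsIntegralCurveOn X (fun t x => σ * soundP K₁ γ (τ x t)) (Icc 0 t) := by
  have hsub : univ ×ˢ Icc 0 t ⊆ (univ : Set ℝ) ×ˢ Ico 0 T :=
    prod_mono_right (Icc_subset_Ico_right ht.2)
  refine exists_isIntegralCurveOn_of_norm_le (C := C)
    (contDiffOn_const.mul (h.contDiffOn_soundP.mono hsub)) (fun p hp => ?_)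
    (right_mem_Icc.2 ht.1) x
  have hnonneg : 0 ≤ soundP K₁ γ (τ p.1 p.2) :=
    mul_nonneg (sqrt_nonneg _) (rpow_nonneg (h.tau_pos (hsub hp)).le _)
  rw [norm_mul, norm_eq_abs, norm_of_nonneg hnonneg]
  exact (mul_le_of_le_one_left hnonneg hσ).trans (hC p (hsub hp))

theorem antitoneOn_gradVar_characteristic (h : PSysSol K₁ γ (Ico 0 T) 1 τ u) (hK₁ : 0 < K₁)
    (hγ : 1 < γ) (hσ : σ ^ 2 = 1) (ht : t < T)
    (hX : IsIntegralCurveOn X (fun t x => σ * soundP K₁ γ (τ x t)) (Icc 0 t)) :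
    AntitoneOn (fun r => gradVar K₁ γ σ τ u (X r, r)) (Icc 0 t) := by
  have hderiv : ∀ r ∈ interior (Icc 0 t), ∃ d ≤ 0,
      HasDerivAt (fun r => gradVar K₁ γ σ τ u (X r, r)) d r := by
    intro r hr
    rw [interior_Icc] at hr
    have hrT : r ∈ Ioo 0 T := Ioo_subset_Ioo_right ht.le hr
    refine ⟨_, ?_, h.hasDerivAt_gradVar_characteristic hK₁ hγ hσ hrT
      (hX.isIntegralCurveAt (Icc_mem_nhds hr.1 hr.2))⟩
    have hpos : 0 < τ (X r) r := h.tau_pos_of_mem_Ioo (p := (X r, r)) hrT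
    have hη := etaP_pos hK₁ hγ hpos
    have : 0 < γ + 1 := by linarith
    rw [neg_div, neg_mul, neg_mul, neg_nonpos]
    positivity
  have hcont := (h.continuousOn_gradVar (uniqueDiffOn_Ico 0 T) hK₁ hγ σ).comp
    (hX.continuousOn.prodMk continuousOn_id) fun r hr => ⟨mem_univ _, Icc_subset_Ico_right ht hr⟩
  exact antitoneOn_of_deriv_nonpos (convex_Icc 0 t) hcont
    (fun r hr => let ⟨_, _, hd⟩ := hderiv r hr; hd.differentiableAt.differentiableWithinAt)
    (fun r hr => let ⟨_, hd₀, hd⟩ := hderiv r hr; hd.deriv.trans_le hd₀)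

theorem exists_gradVar_le_gradVar_initial (h : PSysSol K₁ γ (Ico 0 T) 1 τ u) (hK₁ : 0 < K₁)
    (hγ : 1 < γ) {M m : ℝ} (hm : 0 < m) (hτ₀ : ∀ x, m ≤ τ x 0) (hu₀ : ∀ x, |u x 0| ≤ M)
    (hσ : σ ^ 2 = 1) (ht : t ∈ Ico 0 T) (x : ℝ) :
    ∃ x₀, gradVar K₁ γ σ τ u (x, t) ≤ gradVar K₁ γ σ τ u (x₀, 0) := by
  obtain ⟨X, rfl, hX⟩ := h.exists_isIntegralCurveOn_characteristic
    (h.soundP_le_of_initial_bounds hK₁ hγ hm hτ₀ hu₀) (sq_le_one_iff_abs_le_one σ |>.1 hσ.le) ht x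
  exact ⟨X 0, h.antitoneOn_gradVar_characteristic hK₁ hγ hσ ht.2 hX
    (left_mem_Icc.2 ht.1) (right_mem_Icc.2 ht.1) ht.1⟩

end Interior

end PSysSol

lemma AssumptionA.abs_u_le {M₁ M₂ : ℝ} {τ₀ u₀ : ℝ → ℝ} (hA : AssumptionA M₁ M₂ τ₀ u₀) (x : ℝ) :
    |u₀ x| ≤ M₁ := by
  linarith [hA.2.2.2.2.1 x, abs_nonneg (τ₀ x), abs_nonneg (deriv τ₀ x), abs_nonneg (deriv u₀ x)]

theorem psystem_gradient_upper_bound_general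
    (K₁ γ T M₁ M₂ : ℝ) (hK₁ : 0 < K₁) (hγ : 1 < γ) (hM₂ : 0 < M₂)
    (τ u : ℝ → ℝ → ℝ) (hsol : PSysSol K₁ γ (Set.Ico 0 T) 1 τ u)
    (hτ0 : ∀ x, M₂ ≤ τ x 0) (hu0 : ∀ x, |u x 0| ≤ M₁)
    (y q : ℝ → ℝ → ℝ)
    (hy : ∀ x t, y x t = etaP K₁ γ (τ x t) ^ ((γ + 1) / (2 * (γ - 1)))
        * deriv (fun x' => u x' t + etaP K₁ γ (τ x' t)) x)
    (hq : ∀ x t, q x t = etaP K₁ γ (τ x t) ^ ((γ + 1) / (2 * (γ - 1)))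
        * deriv (fun x' => u x' t - etaP K₁ γ (τ x' t)) x)
    (hybdd : BddAbove (range fun x => y x 0)) (hqbdd : BddAbove (range fun x => q x 0)) :
    ∀ x : ℝ, ∀ t ∈ Set.Ico 0 T, y x t ≤ ⨆ x', y x' 0 ∧ q x t ≤ ⨆ x', q x' 0 := by
  intro x t ht
  obtain ⟨x₁, hx₁⟩ := hsol.exists_gradVar_le_gradVar_initial (σ := 1) hK₁ hγ hM₂ hτ0 hu0
    (by norm_num) ht x
  obtain ⟨x₂, hx₂⟩ := hsol.exists_gradVar_le_gradVar_initial (σ := -1) hK₁ hγ hM₂ hτ0 hu0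
    (by norm_num) ht x
  rw [gradVar_one, gradVar_one, ← hy, ← hy] at hx₁
  rw [gradVar_neg_one, gradVar_neg_one, ← hq, ← hq] at hx₂
  exact ⟨hx₁.trans (le_ciSup hybdd x₁), hx₂.trans (le_ciSup hqbdd x₂)⟩

/-- Lemma 2.3: for `γ > 1` and initial data satisfying Assumption A, every `C¹` solution
of the p-system on `ℝ × [0,T)` satisfies `y(x,t) ≤ Y` and `q(x,t) ≤ Q`, where
`Y = max{0, sup_x y(x,0)}` and `Q = max{0, sup_x q(x,0)}`. -/
theorem psystem_gradient_upper_bound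
    (K₁ γ T M₁ M₂ : ℝ) (hK₁ : 0 < K₁) (hγ : 1 < γ) (hT : 0 < T)
    (τ₀ u₀ : ℝ → ℝ) (hA : AssumptionA M₁ M₂ τ₀ u₀)
    (τ u : ℝ → ℝ → ℝ) (hsol : PSysSol K₁ γ (Set.Ico 0 T) 1 τ u)
    (hτ0 : ∀ x, τ x 0 = τ₀ x) (hu0 : ∀ x, u x 0 = u₀ x)
    (y q : ℝ → ℝ → ℝ)
    (hy : ∀ x t, y x t = etaP K₁ γ (τ x t) ^ ((γ + 1) / (2 * (γ - 1)))
        * deriv (fun x' => u x' t + etaP K₁ γ (τ x' t)) x)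
    (hq : ∀ x t, q x t = etaP K₁ γ (τ x t) ^ ((γ + 1) / (2 * (γ - 1)))
        * deriv (fun x' => u x' t - etaP K₁ γ (τ x' t)) x) :
    ∀ x : ℝ, ∀ t ∈ Set.Ico 0 T,
      y x t ≤ max 0 (⨆ x', y x' 0) ∧ q x t ≤ max 0 (⨆ x', q x' 0) := by
  obtain rfl : (fun x => τ x 0) = τ₀ := funext hτ0
  obtain rfl : (fun x => u x 0) = u₀ := funext hu0
  have hbdd {σ : ℝ} (hσ : |σ| ≤ 1) := hsol.bddAbove_range_gradVar_initial hK₁ hγ ⟨le_rfl, hT⟩ hA hσ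
  have hybdd : BddAbove (range fun x => y x 0) := by
    simpa only [hy, gradVar_one] using hbdd (σ := 1) (by simp)
  have hqbdd : BddAbove (range fun x => q x 0) := by
    simpa only [hq, gradVar_neg_one] using hbdd (σ := -1) (by simp)
  exact fun x t ht => (psystem_gradient_upper_bound_general K₁ γ T M₁ M₂ hK₁ hγ hA.2.2.2.1 τ u hsol
    hA.2.2.2.2.2 hA.abs_u_le y q hy hq hybdd hqbdd x t ht).imp le_max_of_le_right
    le_max_of_le_right
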